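/- Palm correction estimate, squared kernel (Lemma 4.5, first part): fix θ with −√2 < θ < √2 and R ∈ ℕ. With x_θ^N = x/N + θ and T^N_{r,∞}(x) = { y ∈ ℝ : r/N ≤ |x_θ^N − y| }, one has lim_{r→∞} limsup_{N→∞} sup_{|x| < R} ∫_{T^N_{r,∞}(x)} L^N(x_θ^N, y)² / ( |x_θ^N − y| · L^N(x_θ^N, x_θ^N) ) dy = 0. -/

import Mathlib

open Real MeasureTheory Filter Set

/-- Physicists' Hermite polynomial `H_n(x) = (-1)^n e^{x^2} (d/dx)^n e^{-x^2}`. -/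
noncomputable def hermiteP (n : ℕ) (x : ℝ) : ℝ :=
  (-1 : ℝ) ^ n * Real.exp (x ^ 2) * iteratedDeriv n (fun t => Real.exp (-t ^ 2)) x

/-- Oscillator wave function `ψ_n(x) = (√π 2^n n!)^{-1/2} e^{-x^2/2} H_n(x)`. -/
noncomputable def osc (n : ℕ) (x : ℝ) : ℝ :=
  (Real.sqrt (Real.sqrt Real.pi * 2 ^ n * (n.factorial : ℝ)))⁻¹ *
    Real.exp (-x ^ 2 / 2) * hermiteP n x

/-- The kernel `K^N(x,y) = Σ_{k=0}^{N-1} ψ_k(x) ψ_k(y)`. -/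
noncomputable def kerK (N : ℕ) (x y : ℝ) : ℝ :=
  ∑ k ∈ Finset.range N, osc k x * osc k y

/-- The rescaled kernel `L^N(x,y) = N^{-1/2} K^N(√N x, √N y)`. -/
noncomputable def kerL (N : ℕ) (x y : ℝ) : ℝ :=
  (Real.sqrt (N : ℝ))⁻¹ * kerK N (Real.sqrt (N : ℝ) * x) (Real.sqrt (N : ℝ) * y)

/-!
The functions `ψ_k` are orthonormal in `L²(ℝ)`, so `K^N` is the kernel of an orthogonal projection
and `∫ L^N(a, y)² dy = L^N(a, a) / N` at every point `a`. On `{y | r / N ≤ |a - y|}` the weight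
`1 / |a - y|` is at most `N / r`, hence the Palm correction is at most `1 / r`, uniformly in `a`
and `N`. Orthonormality comes from Rodrigues' formula: `n` integrations by parts turn
`∫ p(x) He_n(x) e^{-x²/2} dx` into `∫ p⁽ⁿ⁾(x) e^{-x²/2} dx`, and
`H_n(x) = 2^{n/2} He_n(√2 x)` transfers the result to the physicists' normalization.
-/

lemma setIntegral_div_le_integral_div {α : Type*} [MeasurableSpace α] {μ : Measure α}
    {f g : α → ℝ} (hf : Integrable f μ) (hf0 : 0 ≤ f) (hg : Measurable g) {δ : ℝ} (hδ : 0 < δ) :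
    ∫ y in {y | δ ≤ g y}, f y / g y ∂μ ≤ (∫ y, f y ∂μ) / δ := by
  have hmeas : MeasurableSet {y | δ ≤ g y} := measurableSet_le measurable_const hg
  calc ∫ y in {y | δ ≤ g y}, f y / g y ∂μ
      ≤ ∫ y in {y | δ ≤ g y}, f y / δ ∂μ := by
        refine integral_mono_of_nonneg (ae_restrict_of_forall_mem hmeas fun y hy => ?_)
          (hf.div_const δ).integrableOn (ae_restrict_of_forall_mem hmeas fun y hy => ?_)
        · exact div_nonneg (hf0 y) (hδ.le.trans hy)
        · exact div_le_div_of_nonneg_left (hf0 y) hδ hy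
    _ ≤ ∫ y, f y / δ ∂μ :=
        setIntegral_le_integral (hf.div_const δ)
          (Eventually.of_forall fun y => div_nonneg (hf0 y) hδ.le)
    _ = (∫ y, f y ∂μ) / δ := integral_div δ f

/-- A family of real functions that is orthonormal in `L²(μ)`. It is phrased for functions rather
than for their classes in `Lp ℝ 2 μ` because kernels built from the family are evaluated
pointwise. -/
structure IsOrthonormalFamily {ι α : Type*} [DecidableEq ι] [MeasurableSpace α]
    (φ : ι → α → ℝ) (μ : Measure α) : Prop where
  integrable_mul : ∀ i j, Integrable (fun x => φ i x * φ j x) μ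
  integral_mul : ∀ i j, ∫ x, φ i x * φ j x ∂μ = if i = j then 1 else 0

namespace IsOrthonormalFamily

variable {ι α : Type*} [DecidableEq ι] [MeasurableSpace α] {φ : ι → α → ℝ} {μ : Measure α}

lemma integrable_sum_sq (hφ : IsOrthonormalFamily φ μ) (s : Finset ι) (c : ι → ℝ) :
    Integrable (fun x => (∑ i ∈ s, c i * φ i x) ^ 2) μ := by
  simp only [sq, Finset.sum_mul_sum, mul_mul_mul_comm (c _) (φ _ _)]
  exact integrable_finsetSum _ fun i _ => integrable_finsetSum _ fun j _ =>
    (hφ.integrable_mul i j).const_mul _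

lemma integral_sum_sq (hφ : IsOrthonormalFamily φ μ) (s : Finset ι) (c : ι → ℝ) :
    ∫ x, (∑ i ∈ s, c i * φ i x) ^ 2 ∂μ = ∑ i ∈ s, c i ^ 2 := by
  have hint (i j : ι) : Integrable (fun x => c i * c j * (φ i x * φ j x)) μ :=
    (hφ.integrable_mul i j).const_mul _
  simp only [sq, Finset.sum_mul_sum, mul_mul_mul_comm (c _) (φ _ _)]
  rw [integral_finsetSum _ fun i _ => integrable_finsetSum _ fun j _ => hint i j]
  refine Finset.sum_congr rfl fun i hi => ?_
  rw [integral_finsetSum _ fun j _ => hint i j]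
  simp only [integral_const_mul, hφ.integral_mul, mul_ite, mul_one, mul_zero, Finset.sum_ite_eq,
    if_pos hi]

end IsOrthonormalFamily

section ProbabilistsHermite

open Polynomial

lemma iterate_derivative_of_natDegree_le {A : Type*} [Semiring A] {p : A[X]} {n : ℕ}
    (hp : p.natDegree ≤ n) : derivative^[n] p = C (n.factorial • p.coeff n) := by
  have hconst : (derivative^[n] p).natDegree ≤ 0 :=
    (natDegree_iterate_derivative p n).trans (Nat.sub_eq_zero_of_le hp).le
  rw [eq_C_of_natDegree_le_zero hconst, coeff_iterate_derivative, zero_add,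
    Nat.descFactorial_self]

lemma integrable_eval_mul_exp_neg_mul_sq {b : ℝ} (hb : 0 < b) (p : ℝ[X]) :
    Integrable fun x : ℝ => p.eval x * exp (-b * x ^ 2) := by
  induction p using Polynomial.induction_on' with
  | add p q hp hq => simpa only [eval_add, add_mul] using hp.fun_add hq
  | monomial n a =>
    have hn : (-1 : ℝ) < n := neg_one_lt_zero.trans_le n.cast_nonneg
    simpa only [eval_monomial, rpow_natCast, mul_assoc] using
      (integrable_rpow_mul_exp_neg_mul_sq hb hn).const_mul a

lemma integrable_eval_mul_aeval_mul_exp_neg_half_sq {A : Type*} [CommSemiring A] [Algebra A ℝ]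
    (p : ℝ[X]) (q : A[X]) :
    Integrable fun x : ℝ => p.eval x * (aeval x q * exp (-(x ^ 2 / 2))) := by
  convert integrable_eval_mul_exp_neg_mul_sq one_half_pos (p * q.map (algebraMap A ℝ)) using 2
    with x
  rw [eval_mul, eval_map_algebraMap, ← mul_assoc]
  congr 2
  ring

lemma hasDerivAt_aeval_hermite_mul_exp (n : ℕ) (x : ℝ) :
    HasDerivAt (fun t : ℝ => aeval t (hermite n) * exp (-(t ^ 2 / 2)))
      (-(aeval x (hermite (n + 1)) * exp (-(x ^ 2 / 2)))) x := by
  have hexp : HasDerivAt (fun t : ℝ => exp (-(t ^ 2 / 2))) (exp (-(x ^ 2 / 2)) * -x) x := by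
    simpa using ((hasDerivAt_pow 2 x).div_const 2).fun_neg.exp
  refine (((hermite n).hasDerivAt_aeval x).mul hexp).congr_deriv ?_
  rw [hermite_succ, map_sub, map_mul, aeval_X]
  ring

lemma integral_eval_mul_hermite_succ (p : ℝ[X]) (n : ℕ) :
    ∫ x : ℝ, p.eval x * (aeval x (hermite (n + 1)) * exp (-(x ^ 2 / 2))) =
      ∫ x : ℝ, (derivative p).eval x * (aeval x (hermite n) * exp (-(x ^ 2 / 2))) := by
  have hparts := integral_mul_deriv_eq_deriv_mul_of_integrable
    (fun x _ => p.hasDerivAt x) (fun x _ => hasDerivAt_aeval_hermite_mul_exp n x)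
    (by simpa only [Pi.mul_def, mul_neg] using
      (integrable_eval_mul_aeval_mul_exp_neg_half_sq p (hermite (n + 1))).fun_neg)
    (integrable_eval_mul_aeval_mul_exp_neg_half_sq (derivative p) (hermite n))
    (integrable_eval_mul_aeval_mul_exp_neg_half_sq p (hermite n))
  simpa only [mul_neg, integral_neg, neg_inj] using hparts

lemma integral_eval_mul_hermite (p : ℝ[X]) (n : ℕ) :
    ∫ x : ℝ, p.eval x * (aeval x (hermite n) * exp (-(x ^ 2 / 2))) =
      ∫ x : ℝ, (derivative^[n] p).eval x * exp (-(x ^ 2 / 2)) := by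
  induction n generalizing p with
  | zero => simp
  | succ n ih => rw [integral_eval_mul_hermite_succ, ih, Function.iterate_succ_apply]

lemma integral_eval_mul_hermite_of_natDegree_le {p : ℝ[X]} {n : ℕ} (hp : p.natDegree ≤ n) :
    ∫ x : ℝ, p.eval x * (aeval x (hermite n) * exp (-(x ^ 2 / 2))) =
      √(2 * π) * n.factorial * p.coeff n := by
  have hgauss : ∫ x : ℝ, exp (-(x ^ 2 / 2)) = √(2 * π) := by
    convert integral_gaussian (1 / 2) using 2 <;> ring_nf
  simp only [integral_eval_mul_hermite, iterate_derivative_of_natDegree_le hp, eval_C,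
    integral_const_mul, hgauss, nsmul_eq_mul]
  ring

lemma integral_hermite_mul_hermite (m n : ℕ) :
    ∫ x : ℝ, aeval x (hermite m) * (aeval x (hermite n) * exp (-(x ^ 2 / 2))) =
      if m = n then √(2 * π) * n.factorial else 0 := by
  wlog hmn : m ≤ n generalizing m n
  · have hnm : n < m := not_le.1 hmn
    rw [if_neg hnm.ne', ← (this n m hnm.le).trans (if_neg hnm.ne)]
    simp only [mul_left_comm]
  have hdeg : ((hermite m).map (algebraMap ℤ ℝ)).natDegree ≤ n :=
    natDegree_map_le.trans (natDegree_hermite.trans_le hmn)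
  simp only [← eval_map_algebraMap (B := ℝ) (hermite m),
    integral_eval_mul_hermite_of_natDegree_le hdeg, coeff_map]
  rcases hmn.eq_or_lt with rfl | hlt
  · simp
  · simp [coeff_hermite_of_lt hlt, hlt.ne]

lemma hermiteP_eq_hermite (n : ℕ) (x : ℝ) : hermiteP n x = √2 ^ n * aeval (√2 * x) (hermite n) := by
  have hscale : (fun t : ℝ => exp (-t ^ 2)) = fun t => exp (-((√2 * t) ^ 2 / 2)) := by
    ext t; simp [mul_pow]
  rw [hermiteP, hscale,
    iteratedDeriv_comp_const_mul (f := fun y => exp (-(y ^ 2 / 2))) (by fun_prop),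
    hermite_eq_deriv_gaussian', iteratedDeriv_eq_iterate, mul_pow, sq_sqrt zero_le_two,
    mul_div_cancel_left₀ _ two_ne_zero]
  ring

lemma osc_eq_hermite (n : ℕ) (x : ℝ) :
    osc n x = (√(√π * n.factorial))⁻¹ * aeval (√2 * x) (hermite n) * exp (-x ^ 2 / 2) := by
  have hnorm : √(√π * 2 ^ n * n.factorial) = √2 ^ n * √(√π * n.factorial) := by
    rw [sqrt_eq_iff_mul_self_eq (by positivity) (by positivity), mul_mul_mul_comm,
      mul_self_sqrt (by positivity), ← mul_pow, mul_self_sqrt zero_le_two]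
    ring
  rw [osc, hermiteP_eq_hermite, hnorm]
  field

lemma osc_mul_osc (m n : ℕ) (x : ℝ) :
    osc m x * osc n x = (√(√π * m.factorial))⁻¹ * (√(√π * n.factorial))⁻¹ *
      (aeval (√2 * x) (hermite m) *
        (aeval (√2 * x) (hermite n) * exp (-((√2 * x) ^ 2 / 2)))) := by
  have hexp : exp (-((√2 * x) ^ 2 / 2)) = exp (-x ^ 2 / 2) * exp (-x ^ 2 / 2) := by
    rw [← exp_add, mul_pow, sq_sqrt zero_le_two]
    ring_nf
  rw [osc_eq_hermite, osc_eq_hermite, hexp]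
  ring

lemma integrable_osc_mul_osc (m n : ℕ) : Integrable fun x => osc m x * osc n x := by
  have hint := integrable_eval_mul_aeval_mul_exp_neg_half_sq
    ((hermite m).map (algebraMap ℤ ℝ)) (hermite n)
  simp only [eval_map_algebraMap] at hint
  simpa only [osc_mul_osc] using (hint.comp_mul_left' (by positivity : √2 ≠ 0)).const_mul _

lemma integral_osc_mul_osc (m n : ℕ) : ∫ x, osc m x * osc n x = if m = n then 1 else 0 := by
  simp only [osc_mul_osc, integral_const_mul]
  rw [Measure.integral_comp_mul_left
    (fun y : ℝ => aeval y (hermite m) * (aeval y (hermite n) * exp (-(y ^ 2 / 2)))),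
    integral_hermite_mul_hermite]
  split_ifs with h
  · subst h
    rw [← mul_inv, mul_self_sqrt (by positivity), abs_of_pos (by positivity), smul_eq_mul,
      sqrt_mul zero_le_two]
    field
  · simp

end ProbabilistsHermite

lemma isOrthonormalFamily_osc : IsOrthonormalFamily osc volume :=
  ⟨integrable_osc_mul_osc, integral_osc_mul_osc⟩

lemma integral_kerK_sq (N : ℕ) (u : ℝ) : ∫ v, kerK N u v ^ 2 = kerK N u u := by
  simpa only [kerK, sq] using isOrthonormalFamily_osc.integral_sum_sq (Finset.range N) (osc · u)

lemma kerL_self_nonneg (N : ℕ) (x : ℝ) : 0 ≤ kerL N x x :=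
  mul_nonneg (by positivity) (Finset.sum_nonneg fun _ _ => mul_self_nonneg _)

lemma integrable_kerL_sq (N : ℕ) (x : ℝ) : Integrable fun y => kerL N x y ^ 2 := by
  rcases N.eq_zero_or_pos with rfl | hN
  · simp [kerL]
  have hK := isOrthonormalFamily_osc.integrable_sum_sq (Finset.range N) (osc · (√N * x))
  simpa only [kerL, kerK, mul_pow] using
    (hK.comp_mul_left' (by positivity : √(N : ℝ) ≠ 0)).const_mul _

lemma integral_kerL_sq (N : ℕ) (x : ℝ) : ∫ y, kerL N x y ^ 2 = kerL N x x / N := by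
  simp only [kerL, mul_pow, integral_const_mul]
  rw [Measure.integral_comp_mul_left (fun v => kerK N (√N * x) v ^ 2), integral_kerK_sq,
    abs_of_nonneg (by positivity), inv_pow, sq_sqrt N.cast_nonneg, smul_eq_mul]
  ring

theorem palm_correction_squared_general {N : ℕ} (hN : 1 ≤ N) (a : ℝ) {r : ℝ} (hr : 0 < r) :
    ∫ y in {y : ℝ | r / N ≤ |a - y|}, kerL N a y ^ 2 / (|a - y| * kerL N a a) ≤ r⁻¹ := by
  have hNpos : (0 : ℝ) < N := Nat.cast_pos.2 hN
  calc ∫ y in {y : ℝ | r / N ≤ |a - y|}, kerL N a y ^ 2 / (|a - y| * kerL N a a)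
      = (∫ y in {y : ℝ | r / N ≤ |a - y|}, kerL N a y ^ 2 / |a - y|) / kerL N a a := by
        simp only [← div_div, integral_div]
    _ ≤ (∫ y, kerL N a y ^ 2) / (r / N) / kerL N a a := by
        gcongr
        · exact kerL_self_nonneg N a
        · exact setIntegral_div_le_integral_div (integrable_kerL_sq N a) (fun _ => sq_nonneg _)
            (by fun_prop) (div_pos hr hNpos)
    _ = r⁻¹ * (kerL N a a / kerL N a a) := by
        rw [integral_kerL_sq]
        field
    _ ≤ r⁻¹ := mul_le_of_le_one_right (inv_nonneg.2 hr.le) (div_self_le_one _)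

/-- Palm correction estimate, squared kernel (Lemma 4.5, first part). -/
theorem palm_correction_squared (θ : ℝ) (hθ1 : -Real.sqrt 2 < θ) (hθ2 : θ < Real.sqrt 2)
    (R : ℕ) (hR : 1 ≤ R) :
    ∀ ε : ℝ, 0 < ε → ∃ r0 : ℝ, ∀ r : ℝ, r0 ≤ r → ∃ N0 : ℕ, ∀ N : ℕ, N0 ≤ N →
      ∀ x : ℝ, |x| < (R : ℝ) →
      (∫ y in {y : ℝ | r / (N : ℝ) ≤ |x / (N : ℝ) + θ - y|},
          kerL N (x / (N : ℝ) + θ) y ^ 2 /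
            (|x / (N : ℝ) + θ - y| *
              kerL N (x / (N : ℝ) + θ) (x / (N : ℝ) + θ))) < ε :=
  fun ε hε => ⟨ε⁻¹ + 1, fun r hr => ⟨1, fun _ hN _ _ =>
    (palm_correction_squared_general hN _ ((by positivity : 0 < ε⁻¹ + 1).trans_le hr)).trans_lt
      (inv_lt_of_inv_lt₀ hε ((lt_add_one _).trans_le hr))⟩⟩
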